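/- Let H be a 2-vertex-connected undirected graph with a DFS tree T rooted at r. If {v,e} is a vertex-edge cut-pair of H such that e is an edge of T, then either both endpoints of e are descendants of v in T, or both endpoints of e are ancestors of v in T. -/

import Mathlib

/-- A DFS tree of the graph `H`, rooted at `r`, given by a parent function:
it is a spanning tree (every vertex reaches the root by iterating the parent
function, and each non-root vertex is adjacent to its parent), and every edge
of `H` joins a vertex to one of its ancestors. -/
structure DFSTree {V : Type*} (H : SimpleGraph V) (r : V) where
  par : V → V
  par_root : par r = r
  reaches_root : ∀ v : V, ∃ n : ℕ, par^[n] v = r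
  par_adj : ∀ v : V, v ≠ r → H.Adj v (par v)
  edge_anc : ∀ x y : V, H.Adj x y → (∃ n : ℕ, par^[n] x = y) ∨ (∃ n : ℕ, par^[n] y = x)

namespace DFSTree

variable {V : Type*} {H : SimpleGraph V} {r : V} (T : DFSTree H r)

/-- `a` is an ancestor of `b` (every vertex is an ancestor of itself). -/
def Anc (a b : V) : Prop := ∃ n : ℕ, T.par^[n] b = a

/-- `a` is a proper ancestor of `b`. -/
def PAnc (a b : V) : Prop := T.Anc a b ∧ a ≠ b

/-- `(x,y)` is a back-edge: an edge of `H` from `x` to an ancestor `y` of `x`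
which is not the tree edge from `x` to its parent. -/
def BackEdge (x y : V) : Prop := H.Adj x y ∧ T.Anc y x ∧ T.par x ≠ y

/-- The set of descendants of `v` joined by a back-edge to a proper ancestor of `v`. -/
def MSet (v : V) : Set V := {x | T.Anc v x ∧ ∃ y, T.PAnc y v ∧ T.BackEdge x y}

/-- `m = M(v)`: `m` is the nearest common ancestor of all descendants of `v`
joined by a back-edge to a proper ancestor of `v`. -/
def IsM (v m : V) : Prop :=
  (∀ x ∈ T.MSet v, T.Anc m x) ∧ ∀ m' : V, (∀ x ∈ T.MSet v, T.Anc m' x) → T.Anc m' m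

/-- The set of descendants of `v` joined by a back-edge to a proper ancestor of `p(v)`. -/
def MpSet (v : V) : Set V := {x | T.Anc v x ∧ ∃ y, T.PAnc y (T.par v) ∧ T.BackEdge x y}

/-- `m = M_p(v)`: `m` is the nearest common ancestor of all descendants of `v`
joined by a back-edge to a proper ancestor of `p(v)`. -/
def IsMp (v m : V) : Prop :=
  (∀ x ∈ T.MpSet v, T.Anc m x) ∧ ∀ m' : V, (∀ x ∈ T.MpSet v, T.Anc m' x) → T.Anc m' m

/-- `h = high(v)`: `h` is the deepest proper ancestor of `v` joined by a
back-edge to a descendant of `v`. -/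
def IsHigh (v h : V) : Prop :=
  T.PAnc h v ∧ (∃ x, T.Anc v x ∧ T.BackEdge x h) ∧
    ∀ h' : V, T.PAnc h' v → (∃ x, T.Anc v x ∧ T.BackEdge x h') → T.Anc h' h

/-- `h = high_p(v)`: `h` is the deepest proper ancestor of `p(v)` joined by a
back-edge to a descendant of `v`. -/
def IsHighP (v h : V) : Prop :=
  T.PAnc h (T.par v) ∧ (∃ x, T.Anc v x ∧ T.BackEdge x h) ∧
    ∀ h' : V, T.PAnc h' (T.par v) → (∃ x, T.Anc v x ∧ T.BackEdge x h') → T.Anc h' h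

/-- `l = low(v)`: `l` is the proper ancestor of `v` nearest to the root joined
by a back-edge to a descendant of `v`. -/
def IsLow (v l : V) : Prop :=
  T.PAnc l v ∧ (∃ x, T.Anc v x ∧ T.BackEdge x l) ∧
    ∀ l' : V, T.PAnc l' v → (∃ x, T.Anc v x ∧ T.BackEdge x l') → T.Anc l l'

end DFSTree

/-- `{v, e}` is a vertex-edge cut-pair of `H`: `e` is an edge of `H` and deleting
both `v` (with its incident edges) and `e` disconnects `H`. -/
def VECutPair {V : Type*} (H : SimpleGraph V) (v : V) (e : Sym2 V) : Prop :=
  e ∈ H.edgeSet ∧ ¬ ((H.deleteEdges {e}).induce {u | u ≠ v}).Connected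

/-- `{e, e'}` is a cut-pair of `H`: `e` and `e'` are distinct edges of `H` whose
deletion disconnects `H`. -/
def ECutPair {V : Type*} (H : SimpleGraph V) (e e' : Sym2 V) : Prop :=
  e ∈ H.edgeSet ∧ e' ∈ H.edgeSet ∧ e ≠ e' ∧ ¬ (H.deleteEdges {e, e'}).Connected

/-- An undirected graph is 2-edge-connected if it is connected and has no bridge. -/
def TwoEdgeConnected {W : Type*} (G : SimpleGraph W) : Prop :=
  G.Connected ∧ ∀ e ∈ G.edgeSet, ¬ G.IsBridge e

/-- An undirected graph is 2-vertex-connected if it has at least three vertices,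
is connected, and deleting any single vertex leaves it connected. -/
def TwoVertexConnected {W : Type*} (G : SimpleGraph W) : Prop :=
  3 ≤ Nat.card W ∧ G.Connected ∧ ∀ v : W, (G.induce {u | u ≠ v}).Connected

/-!
Suppose `v` is neither an ancestor nor a descendant of `u`. Then `v` lies neither in the subtree of
`u` nor on the tree path from `p(u)` to the root, and both of these are connected by tree edges
other than `e = {u, p(u)}`. The edge `e` is not a bridge: a third vertex is joined to `u` in
`H - p(u)` and to `p(u)` in `H - u`. So some other edge leaves the subtree of `u`, and by the DFS
property it ends on the path from `p(u)` to the root. Hence `u` and `p(u)` stay connected when `v`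
and `e` are deleted, so deleting `e` from the connected graph `H - v` does not disconnect it.
-/

section Deletion

variable {V : Type*} {G : SimpleGraph V}

theorem deleteEdges_induce_singleton {s : Set V} (a b : s) :
    (G.induce s).deleteEdges {s(a, b)} = (G.deleteEdges {s(a.1, b.1)}).induce s := by
  ext x y
  simp [Subtype.ext_iff]

theorem connected_induce_deleteEdges_of_reachable {s : Set V} {a b : V} {ha : a ∈ s} {hb : b ∈ s}
    (hG : (G.induce s).Connected)
    (hab : ((G.deleteEdges {s(a, b)}).induce s).Reachable ⟨a, ha⟩ ⟨b, hb⟩) :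
    ((G.deleteEdges {s(a, b)}).induce s).Connected := by
  rw [← deleteEdges_induce_singleton ⟨a, ha⟩ ⟨b, hb⟩] at hab ⊢
  exact hG.connected_delete_edge_of_not_isBridge fun hbridge => hbridge hab

theorem reachable_deleteEdges_of_reachable_induce_ne {w : V} {e : Sym2 V} (hw : w ∈ e)
    {a b : {x | x ≠ w}} (hab : (G.induce {x | x ≠ w}).Reachable a b) :
    (G.deleteEdges {e}).Reachable a.1 b.1 := by
  refine hab.map (G' := G.deleteEdges {e}) ⟨Subtype.val, fun {x y} hxy => ?_⟩
  refine SimpleGraph.deleteEdges_adj.2 ⟨hxy, ?_⟩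
  rintro rfl
  exact (Sym2.mem_iff.1 hw).elim (fun h => x.2 h.symm) fun h => y.2 h.symm

theorem TwoVertexConnected.not_isBridge (hG : TwoVertexConnected G) (e : Sym2 V) :
    ¬ G.IsBridge e := by
  induction e with | _ x y
  rw [SimpleGraph.isBridge_iff, not_not]
  obtain rfl | hxy := eq_or_ne x y
  · rfl
  have hcard : 3 ≤ ENat.card V := by
    have := Nat.finite_of_card_ne_zero (α := V) (by have := hG.1; lia)
    rw [ENat.card_eq_coe_natCard]
    exact_mod_cast hG.1
  obtain ⟨z, hzx, hzy⟩ := ENat.exists_ne_ne_of_three_le hcard x y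
  have hxz_reach : (G.deleteEdges {s(x, y)}).Reachable x z :=
    reachable_deleteEdges_of_reachable_induce_ne (Sym2.mem_mk_right x y)
      ((hG.2.2 y).preconnected ⟨x, hxy⟩ ⟨z, hzy⟩)
  have hzy_reach : (G.deleteEdges {s(x, y)}).Reachable z y :=
    reachable_deleteEdges_of_reachable_induce_ne (Sym2.mem_mk_left x y)
      ((hG.2.2 x).preconnected ⟨z, hzx⟩ ⟨y, hxy.symm⟩)
  exact hxz_reach.trans hzy_reach

end Deletion

namespace DFSTree

variable {V : Type*} {H : SimpleGraph V} {r : V} (T : DFSTree H r) {a b c u : V}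

theorem anc_refl (a : V) : T.Anc a a := ⟨0, rfl⟩

theorem par_anc (a : V) : T.Anc (T.par a) a := ⟨1, rfl⟩

theorem root_anc (a : V) : T.Anc r a := T.reaches_root a

variable {T}

theorem Anc.trans (hab : T.Anc a b) (hbc : T.Anc b c) : T.Anc a c := by
  obtain ⟨n, rfl⟩ := hab
  obtain ⟨m, rfl⟩ := hbc
  exact ⟨n + m, Function.iterate_add_apply _ _ _ _⟩

theorem Anc.anc_par_of_ne (hab : T.Anc a b) (hne : a ≠ b) : T.Anc a (T.par b) := by
  obtain ⟨_ | n, hn⟩ := hab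
  · exact absurd hn.symm hne
  · exact ⟨n, hn⟩

theorem Anc.total (hac : T.Anc a c) (hbc : T.Anc b c) : T.Anc a b ∨ T.Anc b a := by
  obtain ⟨n, rfl⟩ := hac
  obtain ⟨m, rfl⟩ := hbc
  rcases le_total n m with hnm | hmn
  · exact .inr ⟨m - n, by rw [← Function.iterate_add_apply, Nat.sub_add_cancel hnm]⟩
  · exact .inl ⟨n - m, by rw [← Function.iterate_add_apply, Nat.sub_add_cancel hmn]⟩

theorem eq_root_of_anc_root (ha : T.Anc a r) : a = r := by
  obtain ⟨n, rfl⟩ := ha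
  exact Function.iterate_fixed T.par_root n

theorem eq_root_of_anc_par (hu : T.Anc u (T.par u)) : u = r := by
  obtain ⟨n, hn⟩ := hu
  obtain ⟨k, hk⟩ := T.reaches_root u
  have hperiod : T.par^[(n + 1) * k] u = u :=
    Function.IsPeriodicPt.mul_const (m := n + 1) hn k
  calc
    u = T.par^[n * k + k] u := by rw [← Nat.succ_mul, hperiod]
    _ = T.par^[n * k] r := by rw [Function.iterate_add_apply, hk]
    _ = r := Function.iterate_fixed T.par_root _

theorem deleteEdges_adj_par (har : a ≠ r) (hau : a ≠ u) :
    (H.deleteEdges {s(u, T.par u)}).Adj a (T.par a) := by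
  refine SimpleGraph.deleteEdges_adj.2 ⟨T.par_adj a har, fun he => ?_⟩
  obtain ⟨rfl, -⟩ | ⟨rfl, hu⟩ := Sym2.eq_iff.1 he
  · exact hau rfl
  · have hur : u = r := eq_root_of_anc_par ⟨1, hu⟩
    exact har (hur ▸ T.par_root)

variable (T)

theorem connected_deleteEdges_induce_descendants (u : V) :
    ((H.deleteEdges {s(u, T.par u)}).induce {x | T.Anc u x}).Connected := by
  rw [SimpleGraph.connected_iff_exists_forall_reachable]
  refine ⟨⟨u, T.anc_refl u⟩, fun ⟨x, n, hn⟩ => ?_⟩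
  induction n generalizing x with
  | zero => obtain rfl : x = u := hn; rfl
  | succ n ih =>
    obtain rfl | hxu := eq_or_ne x u
    · rfl
    have hxr : x ≠ r := by
      rintro rfl
      exact hxu (eq_root_of_anc_root ⟨n + 1, hn⟩).symm
    exact (ih (T.par x) hn).trans
      (SimpleGraph.Adj.reachable (deleteEdges_adj_par hxr hxu).symm)

theorem connected_deleteEdges_induce_ancestors_par (u : V) :
    ((H.deleteEdges {s(u, T.par u)}).induce {y | T.Anc y (T.par u)}).Connected := by
  rw [SimpleGraph.connected_iff_exists_forall_reachable]
  refine ⟨⟨T.par u, T.anc_refl _⟩, fun ⟨y, n, hn⟩ => ?_⟩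
  induction n generalizing y with
  | zero => obtain rfl : T.par u = y := hn; rfl
  | succ n ih =>
    obtain ⟨z, hz⟩ : ∃ z, T.par^[n] (T.par u) = z := ⟨_, rfl⟩
    obtain rfl : T.par z = y := by rw [← hn, ← hz, Function.iterate_succ_apply']
    obtain rfl | hzr := eq_or_ne z r
    · simpa only [T.par_root] using ih z hz
    have hzu : z ≠ u := by
      rintro rfl
      exact hzr (eq_root_of_anc_par ⟨n, hz⟩)
    exact (ih z hz).trans (SimpleGraph.Adj.reachable (deleteEdges_adj_par hzr hzu))

variable {T}

theorem exists_deleteEdges_adj_of_not_isBridge (hu : u ≠ r)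
    (he : ¬ H.IsBridge s(u, T.par u)) :
    ∃ x y, (H.deleteEdges {s(u, T.par u)}).Adj x y ∧ T.Anc u x ∧ T.Anc y (T.par u) := by
  obtain ⟨p⟩ := not_not.1 he
  obtain ⟨⟨⟨x, y⟩, hxy⟩, -, hux, huy⟩ := p.exists_boundary_dart {x | T.Anc u x} (T.anc_refl u)
    fun hup => hu (eq_root_of_anc_par hup)
  have hyx : T.Anc y x := (T.edge_anc x y (SimpleGraph.deleteEdges_le _ hxy)).resolve_right
    fun hanc => huy (Anc.trans hux hanc)
  have hyu : T.Anc y u := (hyx.total hux).resolve_right huy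
  have hne : y ≠ u := fun h => huy (h ▸ T.anc_refl u)
  exact ⟨x, y, hxy, hux, hyu.anc_par_of_ne hne⟩

theorem connected_deleteEdges_induce_descendants_union_ancestors_par (hu : u ≠ r)
    (he : ¬ H.IsBridge s(u, T.par u)) :
    ((H.deleteEdges {s(u, T.par u)}).induce
      ({x | T.Anc u x} ∪ {y | T.Anc y (T.par u)})).Connected := by
  obtain ⟨x, y, hxy, hux, hyu⟩ := exists_deleteEdges_adj_of_not_isBridge hu he
  exact SimpleGraph.connected_induce_union
    (T.connected_deleteEdges_induce_descendants u).preconnected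
    (T.connected_deleteEdges_induce_ancestors_par u).preconnected hux hyu hxy

end DFSTree

theorem stmt_7_general {V : Type*} {H : SimpleGraph V} {r : V} (T : DFSTree H r) {v u : V}
    (hv : (H.induce {w | w ≠ v}).Connected) (he : ¬ H.IsBridge s(u, T.par u))
    (hcut : VECutPair H v s(u, T.par u)) :
    (T.Anc v u ∧ T.Anc v (T.par u)) ∨ (T.Anc u v ∧ T.Anc (T.par u) v) := by
  by_cases huv : T.Anc u v
  · exact .inr ⟨huv, (T.par_anc u).trans huv⟩
  have hur : u ≠ r := fun h => huv (h ▸ T.root_anc v)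
  by_cases hvu : T.Anc v u
  · exact .inl ⟨hvu, hvu.anc_par_of_ne fun h => huv (h ▸ hvu)⟩
  have hsub : {x | T.Anc u x} ∪ {y | T.Anc y (T.par u)} ⊆ {w | w ≠ v} := by
    rintro w (huw | hwu) rfl
    · exact huv huw
    · exact hvu (DFSTree.Anc.trans hwu (T.par_anc u))
  have hreach : ((H.deleteEdges {s(u, T.par u)}).induce {w | w ≠ v}).Reachable
      ⟨u, hsub (.inl (T.anc_refl u))⟩ ⟨T.par u, hsub (.inr (T.anc_refl _))⟩ :=
    ((DFSTree.connected_deleteEdges_induce_descendants_union_ancestors_par hur he).preconnected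
      ⟨u, .inl (T.anc_refl u)⟩ ⟨T.par u, .inr (T.anc_refl _)⟩).map
        (SimpleGraph.induceHomOfLE _ hsub).toHom
  exact absurd (connected_induce_deleteEdges_of_reachable hv hreach) hcut.2

theorem stmt_7 {V : Type*} [Fintype V] (H : SimpleGraph V) (r : V)
    (T : DFSTree H r) (hH : TwoVertexConnected H) (v u : V) (hu : u ≠ r)
    (hcut : VECutPair H v s(u, T.par u)) :
    (T.Anc v u ∧ T.Anc v (T.par u)) ∨ (T.Anc u v ∧ T.Anc (T.par u) v) :=
  stmt_7_general T (hH.2.2 v) (hH.not_isBridge _) hcut
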